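/- Let K₁, K₂ > 0 and 0 < ϑ < π/4, and set t = tan ϑ, u_ex = π/(1 + t). Define 𝒫(u) = (s₁⋆s₂)²·sin(u(1−t))·sin(u(1+t)), 𝒬(u) = s₁⋆s₂·c₁⋆c₂·cos(u)·sin²(ut), and ℛ(u) = −(c₁⋆c₂)²·sin²(ut) − (s₁⋆s₂)²·sin²(u)·cos²(ut) + sin²(ut)·cos²(ut). Then 𝒫(u) > 0 for all u ∈ (0, u_ex), and the function u ↦ (−𝒬(u) + √(𝒬(u)² − 𝒫(u)ℛ(u)))/𝒫(u) tends to +∞ as u → u_ex from below; i.e. the steepest descent path diverges at the vertical asymptote u = u_ex(ϑ) = π/(1 + tan ϑ). -/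

import Mathlib

open Real Filter Set

/-- `𝒜(u,v) = c₁⋆c₂ − s₁⋆s₂ cos u cosh v`. -/
noncomputable def calA (K₁s K₂ u v : ℝ) : ℝ :=
  Real.cosh (2 * K₁s) * Real.cosh (2 * K₂)
    - Real.sinh (2 * K₁s) * Real.sinh (2 * K₂) * Real.cos u * Real.cosh v

/-- `ℬ(u,v) = s₁⋆s₂ sin u sinh v`. -/
noncomputable def calB (K₁s K₂ u v : ℝ) : ℝ :=
  Real.sinh (2 * K₁s) * Real.sinh (2 * K₂) * Real.sin u * Real.sinh v

/-- `𝒫(u) = (s₁⋆s₂)² sin(u(1−t)) sin(u(1+t))`. -/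
noncomputable def calP (K₁s K₂ t u : ℝ) : ℝ :=
  (Real.sinh (2 * K₁s) * Real.sinh (2 * K₂)) ^ 2
    * Real.sin (u * (1 - t)) * Real.sin (u * (1 + t))

/-- `𝒬(u) = s₁⋆s₂ c₁⋆c₂ cos u sin²(ut)`. -/
noncomputable def calQ (K₁s K₂ t u : ℝ) : ℝ :=
  Real.sinh (2 * K₁s) * Real.sinh (2 * K₂)
    * (Real.cosh (2 * K₁s) * Real.cosh (2 * K₂)) * Real.cos u * Real.sin (u * t) ^ 2

/-- `ℛ(u) = −(c₁⋆c₂)² sin²(ut) − (s₁⋆s₂)² sin²u cos²(ut) + sin²(ut) cos²(ut)`. -/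
noncomputable def calR (K₁s K₂ t u : ℝ) : ℝ :=
  -(Real.cosh (2 * K₁s) * Real.cosh (2 * K₂)) ^ 2 * Real.sin (u * t) ^ 2
    - (Real.sinh (2 * K₁s) * Real.sinh (2 * K₂)) ^ 2 * Real.sin u ^ 2 * Real.cos (u * t) ^ 2
    + Real.sin (u * t) ^ 2 * Real.cos (u * t) ^ 2

/-! At `u_ex = π / (1 + t)` the factor `sin (u (1 + t))` of `𝒫` vanishes, so `𝒫` tends to `0` from
above along `u ↑ u_ex`. For `0 < t < 1` we have `π / 2 < u_ex < π`, hence `cos u_ex < 0` and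
`𝒬 u_ex < 0`. The numerator is at least `-𝒬`, which stays away from `0`; in particular `ℛ` has no
influence on the divergence. -/

section Asymptotics

open scoped Topology

theorem pos_of_tanh_pos {x : ℝ} (hx : 0 < tanh x) : 0 < x := by
  simpa only [artanh_tanh] using artanh_pos ⟨hx, tanh_lt_one x⟩

theorem tan_lt_one_of_lt_pi_div_four {x : ℝ} (hx : -(π / 2) < x) (hx' : x < π / 4) : tan x < 1 := by
  rw [← tan_pi_div_four]
  exact tan_lt_tan_of_lt_of_lt_pi_div_two hx (by linarith [pi_pos]) hx'

theorem tendsto_neg_add_sqrt_div_atTop {α : Type*} {l : Filter α} {P Q D : α → ℝ} {q : ℝ}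
    (hq : q < 0) (hP : Tendsto P l (𝓝[>] 0)) (hQ : Tendsto Q l (𝓝 q)) :
    Tendsto (fun x => (-Q x + √(D x)) / P x) l atTop := by
  have h_lower : Tendsto (fun x => -Q x / P x) l atTop := by
    simpa only [div_eq_mul_inv, Function.comp_def] using
      hQ.neg.pos_mul_atTop (neg_pos.2 hq) (tendsto_inv_nhdsGT_zero.comp hP)
  have h_pos : ∀ᶠ x in l, 0 < P x := hP.eventually self_mem_nhdsWithin
  refine tendsto_atTop_mono' l ?_ h_lower
  filter_upwards [h_pos] with x hx
  gcongr
  exact le_add_of_nonneg_right (sqrt_nonneg _)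

/-- The abscissa `u_ex = π / (1 + t)` of the vertical asymptote of the steepest descent path, as a
function of `t = tan ϑ`. -/
noncomputable def uEx (t : ℝ) : ℝ := π / (1 + t)

variable {K₁s K₂ t u : ℝ}

theorem uEx_mul_one_add (ht : 1 + t ≠ 0) : uEx t * (1 + t) = π :=
  div_mul_cancel₀ π ht

theorem uEx_lt_pi (ht : 0 < t) : uEx t < π :=
  div_lt_self pi_pos (lt_add_of_pos_right 1 ht)

theorem pi_div_two_lt_uEx (ht : -1 < t) (ht1 : t < 1) : π / 2 < uEx t :=
  div_lt_div_of_pos_left pi_pos (by linarith) (by linarith)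

theorem uEx_pos (ht : -1 < t) : 0 < uEx t :=
  div_pos pi_pos (by linarith)

theorem continuous_calP (K₁s K₂ t : ℝ) : Continuous (calP K₁s K₂ t) := by
  unfold calP
  fun_prop

theorem continuous_calQ (K₁s K₂ t : ℝ) : Continuous (calQ K₁s K₂ t) := by
  unfold calQ
  fun_prop

theorem calP_pos (hK₁s : K₁s ≠ 0) (hK₂ : K₂ ≠ 0) (ht : 0 ≤ t) (ht1 : t < 1)
    (hu : u ∈ Ioo 0 (uEx t)) : 0 < calP K₁s K₂ t u := by
  have h_add : u * (1 + t) < π := (lt_div_iff₀ (by linarith)).1 hu.2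
  have h_sub : u * (1 - t) ≤ u * (1 + t) :=
    mul_le_mul_of_nonneg_left (by linarith) hu.1.le
  have h_sin_add : 0 < sin (u * (1 + t)) :=
    sin_pos_of_pos_of_lt_pi (mul_pos hu.1 (by linarith)) h_add
  have h_sin_sub : 0 < sin (u * (1 - t)) :=
    sin_pos_of_pos_of_lt_pi (mul_pos hu.1 (by linarith)) (h_sub.trans_lt h_add)
  have h_sinh : sinh (2 * K₁s) * sinh (2 * K₂) ≠ 0 := by simp [hK₁s, hK₂]
  exact mul_pos (mul_pos (pow_two_pos_of_ne_zero h_sinh) h_sin_sub) h_sin_add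

theorem calP_uEx (K₁s K₂ : ℝ) (ht : 1 + t ≠ 0) : calP K₁s K₂ t (uEx t) = 0 := by
  rw [calP, uEx_mul_one_add ht, sin_pi, mul_zero]

theorem tendsto_calP_uEx (hK₁s : K₁s ≠ 0) (hK₂ : K₂ ≠ 0) (ht : 0 ≤ t) (ht1 : t < 1) :
    Tendsto (calP K₁s K₂ t) (𝓝[<] uEx t) (𝓝[>] 0) := by
  have h_lim : Tendsto (calP K₁s K₂ t) (𝓝 (uEx t)) (𝓝 0) :=
    (continuous_calP K₁s K₂ t).tendsto' _ _ (calP_uEx K₁s K₂ (by linarith))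
  have h_pos : ∀ᶠ u in 𝓝[<] uEx t, 0 < calP K₁s K₂ t u := by
    filter_upwards [Ioo_mem_nhdsLT (uEx_pos (by linarith))] with u hu
    exact calP_pos hK₁s hK₂ ht ht1 hu
  exact tendsto_nhdsWithin_iff.2 ⟨h_lim.mono_left nhdsWithin_le_nhds, h_pos⟩

theorem calQ_uEx_neg (hK₁s : 0 < K₁s) (hK₂ : 0 < K₂) (ht : 0 < t) (ht1 : t < 1) :
    calQ K₁s K₂ t (uEx t) < 0 := by
  have h_lt : uEx t < π := uEx_lt_pi ht
  have h_gt : π / 2 < uEx t := pi_div_two_lt_uEx (by linarith) ht1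
  have h_cos : cos (uEx t) < 0 := cos_neg_of_pi_div_two_lt_of_lt h_gt (by linarith)
  have h_mul : uEx t * t = π - uEx t := by
    linarith [uEx_mul_one_add (t := t) (by linarith)]
  have h_sin : 0 < sin (uEx t * t) := by
    rw [h_mul, sin_pi_sub]
    exact sin_pos_of_pos_of_lt_pi (uEx_pos (by linarith)) h_lt
  have h_sinh : 0 < sinh (2 * K₁s) * sinh (2 * K₂) :=
    mul_pos (sinh_pos_iff.2 (by linarith)) (sinh_pos_iff.2 (by linarith))
  have h_cosh : 0 < cosh (2 * K₁s) * cosh (2 * K₂) := mul_pos (cosh_pos _) (cosh_pos _)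
  exact mul_neg_of_neg_of_pos (mul_neg_of_pos_of_neg (mul_pos h_sinh h_cosh) h_cos)
    (pow_pos h_sin 2)

end Asymptotics

theorem statement_12 (K₁ K₂ K₁s K₂s : ℝ) (hK₁ : 0 < K₁) (hK₂ : 0 < K₂)
    (hdual₁ : Real.tanh K₁s = Real.exp (-(2 * K₁)))
    (hdual₂ : Real.tanh K₂s = Real.exp (-(2 * K₂)))
    (ϑ : ℝ) (hϑ₁ : 0 < ϑ) (hϑ₂ : ϑ < π / 4) :
    (∀ u ∈ Set.Ioo (0 : ℝ) (π / (1 + Real.tan ϑ)), 0 < calP K₁s K₂ (Real.tan ϑ) u) ∧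
    Filter.Tendsto
      (fun u => (-(calQ K₁s K₂ (Real.tan ϑ) u)
        + Real.sqrt (calQ K₁s K₂ (Real.tan ϑ) u ^ 2
            - calP K₁s K₂ (Real.tan ϑ) u * calR K₁s K₂ (Real.tan ϑ) u))
        / calP K₁s K₂ (Real.tan ϑ) u)
      (nhdsWithin (π / (1 + Real.tan ϑ)) (Set.Iio (π / (1 + Real.tan ϑ))))
      Filter.atTop := by
  have hK₁s : 0 < K₁s := pos_of_tanh_pos (hdual₁ ▸ exp_pos _)
  have ht : 0 < tan ϑ := tan_pos_of_pos_of_lt_pi_div_two hϑ₁ (by linarith)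
  have ht1 : tan ϑ < 1 := tan_lt_one_of_lt_pi_div_four (by linarith) hϑ₂
  have hQ : Tendsto (calQ K₁s K₂ (tan ϑ)) (nhdsWithin (uEx (tan ϑ)) (Iio (uEx (tan ϑ))))
      (nhds (calQ K₁s K₂ (tan ϑ) (uEx (tan ϑ)))) :=
    (continuous_calQ K₁s K₂ (tan ϑ)).continuousWithinAt
  exact ⟨fun u hu => calP_pos hK₁s.ne' hK₂.ne' ht.le ht1 hu,
    tendsto_neg_add_sqrt_div_atTop (calQ_uEx_neg hK₁s hK₂ ht ht1)
      (tendsto_calP_uEx hK₁s.ne' hK₂.ne' ht.le ht1) hQ⟩
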